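/- For every k ≥ 1 there exists a congruence multiple Dyck language of dimension at most k+1 that is not a multiple context-free language of fan-out at most k, i.e. cmDYCK_{k+1} ∖ MCFL_k ≠ ∅. -/

import Mathlib

namespace CS

/-! ### Dyck languages -/

/-- The smallest monoid congruence on `(S ⊕ S)*` (opening/closing brackets)
satisfying the cancellation `σ σ̄ ≡ ε`. -/
inductive DyckRel (S : Type) : List (S ⊕ S) → List (S ⊕ S) → Prop
  | cancel (σ : S) : DyckRel S [Sum.inl σ, Sum.inr σ] []
  | refl (w : List (S ⊕ S)) : DyckRel S w w
  | symm {u v} : DyckRel S u v → DyckRel S v u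
  | trans {u v w} : DyckRel S u v → DyckRel S v w → DyckRel S u w
  | append {u v u' v'} : DyckRel S u v → DyckRel S u' v' →
      DyckRel S (u ++ u') (v ++ v')

/-- The Dyck language `D(S) = [ε]_{≡_S}`. -/
def DyckLang (S : Type) : Set (List (S ⊕ S)) := {w | DyckRel S w []}

/-- The smallest monoid congruence on `(S ⊕ S)*` closed under the cancellation rule
of congruence multiple Dyck languages:  whenever `{σ₁, …, σ_ℓ} ∈ P`,
`u₀, …, u_ℓ, v₁, …, v_ℓ ∈ D(S)` and `v₁ ⋯ v_ℓ ≡ ε`, then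
`u₀ σ₁ v₁ σ̄₁ u₁ ⋯ σ_ℓ v_ℓ σ̄_ℓ u_ℓ ≡ u₀ u₁ ⋯ u_ℓ`.
The data of `σ₁, …, σ_ℓ`, `v₁, …, v_ℓ` and `u₁, …, u_ℓ` is given by a list
`ts` of triples `(σᵢ, vᵢ, uᵢ)`. -/
inductive MDyckRel (S : Type) (P : Set (Set S)) : List (S ⊕ S) → List (S ⊕ S) → Prop
  | refl (w : List (S ⊕ S)) : MDyckRel S P w w
  | symm {u v} : MDyckRel S P u v → MDyckRel S P v u
  | trans {u v w} : MDyckRel S P u v → MDyckRel S P v w → MDyckRel S P u w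
  | append {u v u' v'} : MDyckRel S P u v → MDyckRel S P u' v' →
      MDyckRel S P (u ++ u') (v ++ v')
  | cancel (u0 : List (S ⊕ S)) (ts : List (S × List (S ⊕ S) × List (S ⊕ S))) :
      (ts.map Prod.fst).Nodup →
      {σ | σ ∈ ts.map Prod.fst} ∈ P →
      u0 ∈ DyckLang S →
      (∀ t ∈ ts, t.2.1 ∈ DyckLang S ∧ t.2.2 ∈ DyckLang S) →
      MDyckRel S P ((ts.map (fun t => t.2.1)).flatten) [] →
      MDyckRel S P
        (u0 ++ (ts.map (fun t => Sum.inl t.1 :: t.2.1 ++ [Sum.inr t.1] ++ t.2.2)).flatten)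
        (u0 ++ (ts.map (fun t => t.2.2)).flatten)

/-- The congruence multiple Dyck language `mD_c(S, P) = [ε]_{≡_{S,P}}`. -/
def MDyckLang (S : Type) (P : Set (Set S)) : Set (List (S ⊕ S)) := {w | MDyckRel S P w []}

/-- The class of congruence multiple Dyck languages over `S` of dimension at most `k`. -/
def cmDyckClass (k : ℕ) (S : Type) : Set (Set (List (S ⊕ S))) :=
  {L | ∃ Pa : Set (Set S), Setoid.IsPartition Pa ∧ (∀ p ∈ Pa, p.ncard ≤ k) ∧
        L = MDyckLang S Pa}

/-! ### Complete commutative strong bimonoids -/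

/-- A complete commutative strong bimonoid: two commutative monoid structures
`(A, +, 0)` and `(A, ·, 1)` with `0` multiplicatively absorbing, together with an
infinitary sum operation satisfying the axioms of Droste and Vogler. -/
class CCSBimonoid (A : Type) extends AddCommMonoid A, CommMonoid A where
  zero_mul' : ∀ a : A, 0 * a = 0
  mul_zero' : ∀ a : A, a * 0 = 0
  bigSum : {I : Type} → Set I → (I → A) → A
  bigSum_empty : ∀ {I : Type} (f : I → A), bigSum (∅ : Set I) f = 0
  bigSum_singleton : ∀ {I : Type} (j : I) (f : I → A), bigSum {j} f = f j
  bigSum_pair : ∀ {I : Type} (j k : I) (f : I → A), j ≠ k →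
      bigSum {j, k} f = f j + f k
  bigSum_partition : ∀ {I J : Type} [Countable J] (T : J → Set I) (f : I → A),
      (∀ j j', j ≠ j' → T j ∩ T j' = ∅) →
      bigSum (Set.univ : Set J) (fun j => bigSum (T j) f) = bigSum (⋃ j, T j) f

/-! ### Multiple context-free grammars -/

/-- A production `A → [u₁, …, u_s](A₁, …, A_ℓ)` of an MCFG.  Letters of the
components are either terminals (`Sum.inl`) or variables `x_i^j`, encoded
0-based as pairs `(i, j)` (`Sum.inr`).  `wf` states well-sortedness of the
variables and `linear` that every variable occurs at most once in `u₁ ⋯ u_s`. -/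
structure Production (Δ N : Type) (sortN : N → ℕ) where
  lhs : N
  rhs : List N
  comp : List (List (Δ ⊕ ℕ × ℕ))
  comp_len : comp.length = sortN lhs
  wf : ∀ p ∈ comp.flatten.filterMap Sum.getRight?,
        ∃ h : p.1 < rhs.length, p.2 < sortN (rhs.get ⟨p.1, h⟩)
  linear : (comp.flatten.filterMap Sum.getRight?).Nodup

namespace Production

variable {Δ N : Type} {sortN : N → ℕ}

/-- The list of occurrences of variables in the components of a production. -/
def vars (ρ : Production Δ N sortN) : List (ℕ × ℕ) :=
  ρ.comp.flatten.filterMap Sum.getRight?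

/-- A production is non-deleting if every variable `x_i^j` occurs (at least,
hence by linearity exactly, once). -/
def NonDeleting (ρ : Production Δ N sortN) : Prop :=
  ∀ (i : ℕ) (h : i < ρ.rhs.length), ∀ j < sortN (ρ.rhs.get ⟨i, h⟩), (i, j) ∈ ρ.vars

/-- A production is terminal-free if no terminal occurs in its components. -/
def TerminalFree (ρ : Production Δ N sortN) : Prop :=
  ∀ u ∈ ρ.comp, ∀ v ∈ u, ∃ p : ℕ × ℕ, v = Sum.inr p

end Production

/-- Substitution of argument tuples for the variables of a component. -/
def subst {Δ : Type} (args : List (List (List Δ))) (u : List (Δ ⊕ ℕ × ℕ)) : List Δ :=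
  u.flatMap (fun v => match v with
    | Sum.inl d => [d]
    | Sum.inr (i, j) => (args.getD i []).getD j [])

/-- Rose trees; derivations of an MCFG are well-sorted trees over the productions. -/
inductive Tree (P : Type) : Type
  | node : P → List (Tree P) → Tree P

/-- The yield of a derivation tree: evaluate the string functions bottom-up. -/
def Tree.yield {Δ N : Type} {sortN : N → ℕ} :
    Tree (Production Δ N sortN) → List (List Δ)
  | .node ρ ts => ρ.comp.map (subst (ts.attach.map (fun t => Tree.yield t.1)))
decreasing_by simp_wf; have := List.sizeOf_lt_of_mem t.2; omega

/-- Relabelling of derivation trees. -/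
def Tree.map {P Q : Type} (f : P → Q) : Tree P → Tree Q
  | .node ρ ts => .node (f ρ) (ts.attach.map (fun t => Tree.map f t.1))
decreasing_by simp_wf; have := List.sizeOf_lt_of_mem t.2; omega

/-- Well-sorted derivation trees over a set of productions, from a given
non-terminal. -/
inductive WFDeriv {Δ N : Type} {sortN : N → ℕ} (P : Set (Production Δ N sortN)) :
    N → Tree (Production Δ N sortN) → Prop
  | node (ρ : Production Δ N sortN) (ts : List (Tree (Production Δ N sortN))) :
      ρ ∈ P → ts.length = ρ.rhs.length →
      (∀ (i : ℕ) (h1 : i < ts.length) (h2 : i < ρ.rhs.length),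
        WFDeriv P (ρ.rhs.get ⟨i, h2⟩) (ts.get ⟨i, h1⟩)) →
      WFDeriv P ρ.lhs (Tree.node ρ ts)

/-- A multiple context-free grammar over the terminal alphabet `Δ`. -/
structure MCFG (Δ : Type) where
  N : Type
  sortN : N → ℕ
  S : N
  sort_S : sortN S = 1
  P : Set (Production Δ N sortN)

namespace MCFG

variable {Δ : Type}

/-- The set `D_G` of derivations of `G` (from the initial non-terminal). -/
def Derivs (G : MCFG Δ) : Set (Tree (Production Δ G.N G.sortN)) :=
  {d | WFDeriv G.P G.S d}

/-- The language of an MCFG. -/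
def lang (G : MCFG Δ) : Set (List Δ) :=
  {w | ∃ d ∈ G.Derivs, d.yield = [w]}

/-- `G` has fan-out at most `k`. -/
def FanoutLE (G : MCFG Δ) (k : ℕ) : Prop := ∀ ρ ∈ G.P, ρ.comp.length ≤ k

/-- `G` is non-deleting. -/
def NonDeleting (G : MCFG Δ) : Prop := ∀ ρ ∈ G.P, ρ.NonDeleting

end MCFG

/-- The class of multiple context-free languages over `Δ` of fan-out at most `k`. -/
def MCFL (k : ℕ) (Δ : Type) : Set (Set (List Δ)) :=
  {L | ∃ G : MCFG Δ, Finite G.N ∧ G.P.Finite ∧ G.FanoutLE k ∧ G.lang = L}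

/-! ### Weighted MCFGs -/

/-- The weight of a derivation tree: multiply the weights of the productions at
all positions. -/
def Tree.weight {P A : Type} [CCSBimonoid A] (μ : P → A) : Tree P → A
  | .node ρ ts => μ ρ * (ts.attach.map (fun t => Tree.weight μ t.1)).prod
decreasing_by simp_wf; have := List.sizeOf_lt_of_mem t.2; omega

/-- An `A`-weighted MCFG. -/
structure WMCFG (A Δ : Type) [CCSBimonoid A] extends MCFG Δ where
  μ : Production Δ N sortN → A
  μ_ne : ∀ ρ ∈ P, μ ρ ≠ 0

/-- The weighted language induced by an `A`-weighted MCFG: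
`⟦G⟧(w) = Σ_{d derivation of w} μ̂(d)`. -/
noncomputable def WMCFG.sem {A Δ : Type} [CCSBimonoid A] (G : WMCFG A Δ) :
    List Δ → A :=
  fun w => CCSBimonoid.bigSum
    {d | WFDeriv G.P G.S d ∧ d.yield = [w]} (fun d => d.weight G.μ)

/-- The class of `A`-weighted multiple context-free languages over `Δ`
of fan-out at most `k`. -/
def WMCFL (k : ℕ) (A Δ : Type) [CCSBimonoid A] : Set (List Δ → A) :=
  {L | ∃ G : WMCFG A Δ, Finite G.N ∧ G.P.Finite ∧ G.toMCFG.FanoutLE k ∧ G.sem = L}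

/-! ### Weighted homomorphisms -/

/-- A weighted language is a monomial if its support has at most one element. -/
def IsMonomial {Γ A : Type} [CCSBimonoid A] (m : List Γ → A) : Prop :=
  ∀ u v, m u ≠ 0 → m v ≠ 0 → u = v

/-- `g` induces an `A`-weighted homomorphism. -/
def WeightedHom {Δ Γ A : Type} [CCSBimonoid A] (g : Δ → List Γ → A) : Prop :=
  ∀ δ, IsMonomial (g δ)

/-- `g` induces an `A`-weighted alphabetic homomorphism: all supports consist of
words of length at most 1. -/
def AlphabeticWeightedHom {Δ Γ A : Type} [CCSBimonoid A] (g : Δ → List Γ → A) : Prop :=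
  WeightedHom g ∧ ∀ δ u, g δ u ≠ 0 → u.length ≤ 1

/-- The `A`-weighted homomorphism `ĝ` induced by `g`:
`ĝ(δ₁⋯δ_k)(u) = Σ_{u = u₁⋯u_k} g(δ₁)(u₁)·…·g(δ_k)(u_k)`. -/
noncomputable def whom {Δ Γ A : Type} [CCSBimonoid A] (g : Δ → List Γ → A)
    (w : List Δ) : List Γ → A :=
  fun u => CCSBimonoid.bigSum
    {ds : List (List Γ) | ds.length = w.length ∧ ds.flatten = u}
    (fun ds => ((w.zip ds).map (fun p => g p.1 p.2)).prod)

/-- The image of a language under an `A`-weighted homomorphism: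
`ĝ(L)(u) = Σ_{w ∈ L} ĝ(w)(u)`. -/
noncomputable def whomImage {Δ Γ A : Type} [CCSBimonoid A] (g : Δ → List Γ → A)
    (L : Set (List Δ)) : List Γ → A :=
  fun u => CCSBimonoid.bigSum L (fun w => whom g w u)

/-! ### Regular languages -/

/-- A language is regular if it is recognised by a finite automaton. -/
def IsRegular {α : Type} (L : Set (List α)) : Prop :=
  ∃ (Q : Type) (_ : Fintype Q) (M : DFA α Q), ∀ w, w ∈ M.accepts ↔ w ∈ L

end CS
namespace CS

/-! ### The unweighted MCFG for a weighted MCFG (weight separation) -/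

/-- Relabel the terminals of a component into the marked alphabet. -/
def markify (M : Type) {Δ : Type} (u : List (Δ ⊕ ℕ × ℕ)) :
    List ((Δ ⊕ M) ⊕ ℕ × ℕ) :=
  u.map (Sum.map Sum.inl id)

lemma markify_filterMap (M : Type) {Δ : Type} (u : List (Δ ⊕ ℕ × ℕ)) :
    (markify M u).filterMap Sum.getRight? = u.filterMap Sum.getRight? := by
  induction u with
  | nil => rfl
  | cons a l ih =>
    cases a
    · exact ih
    · exact congrArg (List.cons _) ih

lemma filterMap_flatten {α β : Type} (f : α → Option β) (l : List (List α)) :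
    l.flatten.filterMap f = (l.map (List.filterMap f)).flatten := by
  induction l <;> simp [*]

lemma ofFn_comp_get {α β : Type} (l : List α) (h : α → β) :
    List.ofFn (fun i : Fin l.length => h (l.get i)) = l.map h := by
  conv_rhs => rw [← List.ofFn_get l]
  rw [List.map_ofFn]
  rfl

lemma mark_flatten_vars {Δ M : Type} (l : List (List (Δ ⊕ ℕ × ℕ)))
    (mk : Fin l.length → Δ ⊕ M) :
    (List.ofFn (fun i =>
        (Sum.inl (mk i) : (Δ ⊕ M) ⊕ ℕ × ℕ) :: markify M (l.get i))).flatten.filterMap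
      Sum.getRight? = l.flatten.filterMap Sum.getRight? := by
  rw [filterMap_flatten, List.map_ofFn, filterMap_flatten]
  congr 1
  have : (List.filterMap Sum.getRight? ∘ fun i =>
      (Sum.inl (mk i) : (Δ ⊕ M) ⊕ ℕ × ℕ) :: markify M (l.get i))
      = fun i : Fin l.length => (l.get i).filterMap Sum.getRight? := by
    funext i
    simp [List.filterMap_cons, Sum.getRight?, markify_filterMap]
  rw [this, ofFn_comp_get]

/-- The production of the unweighted MCFG `G_𝔹` corresponding to a production
`ρ = A → [u₁, …, u_s](A₁, …, A_m)`: each component `uᵢ` is prefixed with the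
fresh terminal symbol `ρ^i` (encoded as `Sum.inr (ρ, i)`, 0-based). -/
def boolifyProd {Δ N : Type} {sortN : N → ℕ} (ρ : Production Δ N sortN) :
    Production (Δ ⊕ Production Δ N sortN × ℕ) N sortN where
  lhs := ρ.lhs
  rhs := ρ.rhs
  comp := List.ofFn (fun i : Fin ρ.comp.length =>
    Sum.inl (Sum.inr (ρ, (i : ℕ))) ::
      markify (Production Δ N sortN × ℕ) (ρ.comp.get i))
  comp_len := by rw [List.length_ofFn]; exact ρ.comp_len
  wf := by
    intro p hp
    rw [mark_flatten_vars] at hp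
    exact ρ.wf p hp
  linear := by
    rw [mark_flatten_vars]
    exact ρ.linear

/-- The unweighted MCFG `G_𝔹` for a weighted MCFG `G`. -/
def boolifyGrammar {A Δ : Type} [CCSBimonoid A] (G : WMCFG A Δ) :
    MCFG (Δ ⊕ Production Δ G.N G.sortN × ℕ) where
  N := G.N
  sortN := G.sortN
  S := G.S
  sort_S := G.sort_S
  P := boolifyProd '' G.P

/-- The weight homomorphism `wts_G` for a weighted MCFG `G`:
`wts_G(δ) = 1.δ`, `wts_G(ρ^1) = μ(ρ).ε` and `wts_G(ρ^i) = 1.ε` for `i ≥ 2`. -/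
noncomputable def wtsHom {A Δ : Type} [CCSBimonoid A] (G : WMCFG A Δ) :
    (Δ ⊕ Production Δ G.N G.sortN × ℕ) → List Δ → A := by
  classical
  exact fun γ w => match γ with
    | Sum.inl d => if w = [d] then 1 else 0
    | Sum.inr (ρ, i) => if w = [] then (if i = 0 then G.μ ρ else 1) else 0

/-! ### The multiple Dyck grammar -/

/-- The sorted alphabet `Σ` induced by an `ℕ₊`-sorted set `(Δ, sd)`:
the opening parentheses `δ^[i]` (0-based: `i < sd δ`). -/
abbrev MSig (Δ : Type) (sd : Δ → ℕ) : Type := {p : Δ × ℕ // p.2 < sd p.1}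

/-- The terminal alphabet `Δ̂` of the multiple Dyck grammar: opening and closing
parentheses. -/
abbrev MAlph (Δ : Type) (sd : Δ → ℕ) : Type := MSig Δ sd ⊕ MSig Δ sd

/-- The partition `𝔓 = {𝔭_δ ∣ δ ∈ Δ}` with `𝔭_δ = {δ^[i] ∣ i ∈ [sd δ]}`. -/
def mdgPart (Δ : Type) (sd : Δ → ℕ) : Set (Set (MSig Δ sd)) :=
  {s | ∃ δ : Δ, s = {p : MSig Δ sd | p.1.1 = δ}}

/-- Sorts of the non-terminals `A₁, …, A_k` (0-based: `A_{i+1}` has sort `i+1`). -/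
def dyckSort (k : ℕ) : Fin k → ℕ := fun i => (i : ℕ) + 1

/-- Productions of type (i): `A_s → f(A_{s₁}, …, A_{s_ℓ})` for every linear
non-deleting terminal-free string function `f` with `ℓ ≤ r`. -/
def TypeI (Δ : Type) (sd : Δ → ℕ) (k r : ℕ)
    (ρ : Production (MAlph Δ sd) (Fin k) (dyckSort k)) : Prop :=
  ρ.rhs.length ≤ r ∧ ρ.NonDeleting ∧ ρ.TerminalFree

/-- Productions of type (ii):
`A_s → [δ^[1] x₁^1 δ̄^[1], …, δ^[s] x₁^s δ̄^[s]](A_s)` for `δ` of sort `s`. -/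
def TypeII (Δ : Type) (sd : Δ → ℕ) (k : ℕ)
    (ρ : Production (MAlph Δ sd) (Fin k) (dyckSort k)) : Prop :=
  ∃ δ : Δ, dyckSort k ρ.lhs = sd δ ∧ ρ.rhs = [ρ.lhs] ∧
    ρ.comp = List.ofFn (fun j : Fin (sd δ) =>
      [Sum.inl (Sum.inl ⟨(δ, (j : ℕ)), j.isLt⟩),
       Sum.inr ((0 : ℕ), (j : ℕ)),
       Sum.inl (Sum.inr ⟨(δ, (j : ℕ)), j.isLt⟩)])

/-- Productions of type (iii): `A_s → [u₁, …, u_s](A_s)` where each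
`u_j ∈ {x_j, x_j δ^[1] δ̄^[1], δ^[1] δ̄^[1] x_j}` for `δ` of sort 1. -/
def TypeIII (Δ : Type) (sd : Δ → ℕ) (k : ℕ)
    (ρ : Production (MAlph Δ sd) (Fin k) (dyckSort k)) : Prop :=
  ρ.rhs = [ρ.lhs] ∧
  ∀ (j : ℕ) (h : j < ρ.comp.length),
    ρ.comp.get ⟨j, h⟩ = [Sum.inr ((0 : ℕ), j)] ∨
    ∃ (δ : Δ) (h1 : 0 < sd δ), sd δ = 1 ∧
      (ρ.comp.get ⟨j, h⟩ =
        [Sum.inr ((0 : ℕ), j),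
         Sum.inl (Sum.inl ⟨(δ, 0), h1⟩), Sum.inl (Sum.inr ⟨(δ, 0), h1⟩)] ∨
       ρ.comp.get ⟨j, h⟩ =
        [Sum.inl (Sum.inl ⟨(δ, 0), h1⟩), Sum.inl (Sum.inr ⟨(δ, 0), h1⟩),
         Sum.inr ((0 : ℕ), j)])

/-- The productions of the multiple Dyck grammar `G_Δ`. -/
def mdgProds (Δ : Type) (sd : Δ → ℕ) (k r : ℕ) :
    Set (Production (MAlph Δ sd) (Fin k) (dyckSort k)) :=
  {ρ | TypeI Δ sd k r ρ ∨ TypeII Δ sd k ρ ∨ TypeIII Δ sd k ρ}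

/-- The multiple Dyck grammar `G_Δ` with respect to the sorted set `(Δ, sd)`. -/
def mdgGrammar (Δ : Type) (sd : Δ → ℕ) (k r : ℕ) (hk : 0 < k) :
    MCFG (MAlph Δ sd) where
  N := Fin k
  sortN := dyckSort k
  S := ⟨0, hk⟩
  sort_S := rfl
  P := mdgProds Δ sd k r

end CS

/-!
Over `k + 1` bracket types forming a single block, every letter occurs equally often in every
word of the multiple Dyck language, and the language contains the words `σ₀ⁿ σ̄₀ⁿ σ₁ⁿ σ̄₁ⁿ ⋯ σₖⁿ
σ̄ₖⁿ`. In a grammar of fan-out at most `k`, a derivation of such a word with large `n` can be cut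
at a node whose tuple has total length at least `g` and at most linear in `g`. The tuple then
consists of at most `k` factors of length at most `n`, each meeting at most two letters, so one
of the `2 (k + 1)` letters is missing from it. By pigeonhole, two such cuts with tuples of
different lengths agree in the non-terminal, the surviving components and a missing letter.
Plugging the tuple of one into the context of the other changes the length of the word but not
the count of the missing letter, although that count determines the length.
-/

namespace CS

/-! ### Words with holes -/

section Words

variable {Δ X Y : Type*}

/-- The hole occurrences of a word over the terminals `Δ` and the holes `X`. A component of a
production is such a word, its holes being its variables. -/
def holes (u : List (Δ ⊕ X)) : List X := u.filterMap Sum.getRight?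

/-- The terminal occurrences of a word over the terminals `Δ` and the holes `X`. -/
def terminals (u : List (Δ ⊕ X)) : List Δ := u.filterMap Sum.getLeft?

/-- The word obtained from `u` by substituting the terminal word `σ x` for every hole `x`. -/
def fill (σ : X → List Δ) (u : List (Δ ⊕ X)) : List Δ :=
  u.flatMap (Sum.elim (fun d => [d]) σ)

/-- The word obtained from `u` by substituting the word with holes `τ x` for every hole `x`. -/
def substHoles (τ : X → List (Δ ⊕ Y)) (u : List (Δ ⊕ X)) : List (Δ ⊕ Y) :=
  u.flatMap (Sum.elim (fun d => [Sum.inl d]) τ)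

/-- The letters of `fill σ u` that stem from the holes of `u`. -/
def content (σ : X → List Δ) (u : List (Δ ⊕ X)) : List Δ := (holes u).flatMap σ

theorem holes_append (u v : List (Δ ⊕ X)) : holes (u ++ v) = holes u ++ holes v :=
  List.filterMap_append

theorem fill_map_inl (σ : X → List Δ) (w : List Δ) : fill σ (w.map Sum.inl) = w := by
  simp [fill, List.flatMap_map]

theorem fill_substHoles (σ : Y → List Δ) (τ : X → List (Δ ⊕ Y)) (u : List (Δ ⊕ X)) :
    fill σ (substHoles τ u) = fill (fun x => fill σ (τ x)) u := by
  simp only [fill, substHoles, List.flatMap_assoc]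
  congr! with (d | x)

theorem holes_map_inl (w : List Δ) : holes (w.map Sum.inl : List (Δ ⊕ X)) = [] := by
  simp [holes, List.filterMap_eq_nil_iff]

theorem holes_substHoles (τ : X → List (Δ ⊕ Y)) (u : List (Δ ⊕ X)) :
    holes (substHoles τ u) = (holes u).flatMap fun x => holes (τ x) := by
  induction u with
  | nil => rfl
  | cons a u ih =>
    rw [substHoles, List.flatMap_cons, holes_append, ← substHoles, ih]
    cases a <;> rfl

theorem fill_perm (σ : X → List Δ) (u : List (Δ ⊕ X)) :
    (fill σ u).Perm (terminals u ++ content σ u) := by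
  induction u with
  | nil => rfl
  | cons a u ih =>
    rcases a with d | x
    · exact ih.cons d
    · calc
        fill σ (Sum.inr x :: u) = σ x ++ fill σ u := rfl
        List.Perm _ (σ x ++ (terminals u ++ content σ u)) := ih.append_left _
        List.Perm _ (terminals u ++ (σ x ++ content σ u)) := List.perm_append_comm_assoc ..

theorem length_fill_le (σ : X → List Δ) (u : List (Δ ⊕ X)) :
    (fill σ u).length ≤ u.length + (content σ u).length := by
  rw [(fill_perm σ u).length_eq, List.length_append]
  exact Nat.add_le_add_right (List.length_filterMap_le _ _) _

theorem infix_fill (σ : X → List Δ) {u : List (Δ ⊕ X)} {x : X} (hx : x ∈ holes u) :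
    σ x <:+: fill σ u := by
  obtain ⟨a, ha, hax⟩ := List.mem_filterMap.1 hx
  obtain rfl := Sum.getRight?_eq_some_iff.1 hax
  obtain ⟨u₁, u₂, rfl⟩ := List.append_of_mem ha
  exact ⟨fill σ u₁, fill σ u₂, by simp [fill]⟩

theorem subst_eq_fill {Δ : Type} (args : List (List (List Δ))) (c : List (Δ ⊕ ℕ × ℕ)) :
    subst args c = fill (fun p => (args.getD p.1 []).getD p.2 []) c := by
  unfold subst fill
  congr! with (d | p)

end Words

/-! ### Contexts in derivations -/

section Restrict

variable {Δ : Type*}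

/-- For a word in the holes `(i, j)` ("component `j` of child `i`"), substitute `σ (i', j)` for
the holes of all children `i' ≠ i`, which leaves a word in the components of child `i`. -/
def restrict (σ : ℕ × ℕ → List Δ) (i : ℕ) (v : List (Δ ⊕ ℕ × ℕ)) : List (Δ ⊕ ℕ) :=
  substHoles (fun p => if p.1 = i then [Sum.inr p.2] else (σ p).map Sum.inl) v

theorem fill_restrict (z : ℕ → List Δ) (σ : ℕ × ℕ → List Δ) (i : ℕ) (v : List (Δ ⊕ ℕ × ℕ)) :
    fill z (restrict σ i v) = fill (fun p => if p.1 = i then z p.2 else σ p) v := by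
  rw [restrict, fill_substHoles]
  congr! 2 with p
  split_ifs
  · simp [fill]
  · exact fill_map_inl _ _

theorem holes_restrict (σ : ℕ × ℕ → List Δ) (i : ℕ) (v : List (Δ ⊕ ℕ × ℕ)) :
    holes (restrict σ i v) = ((holes v).filter (·.1 = i)).map Prod.snd := by
  rw [restrict, holes_substHoles]
  induction holes v with
  | nil => rfl
  | cons p l ih =>
    by_cases hp : p.1 = i
    · rw [List.flatMap_cons, ih]
      simp [hp, holes]
    · simp [hp, ih, holes_map_inl]

theorem mem_holes_restrict {σ : ℕ × ℕ → List Δ} {i j : ℕ} {v : List (Δ ⊕ ℕ × ℕ)} :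
    j ∈ holes (restrict σ i v) ↔ (i, j) ∈ holes v := by
  simp [holes_restrict]

theorem nodup_holes_restrict (σ : ℕ × ℕ → List Δ) (i : ℕ) {v : List (Δ ⊕ ℕ × ℕ)}
    (hv : (holes v).Nodup) : (holes (restrict σ i v)).Nodup := by
  rw [holes_restrict]
  refine (hv.filter _).map_on fun p hp q hq hpq => ?_
  simp only [List.mem_filter, decide_eq_true_eq] at hp hq
  exact Prod.ext (hp.2.trans hq.2.symm) hpq

theorem length_content_eq_sum_restrict (σ : ℕ × ℕ → List Δ) {m : ℕ} {v : List (Δ ⊕ ℕ × ℕ)}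
    (hv : ∀ p ∈ holes v, p.1 < m) :
    (content σ v).length =
      ∑ i ∈ Finset.range m, (content (fun j => σ (i, j)) (restrict σ i v)).length := by
  simp only [content, holes_restrict]
  generalize holes v = l at hv ⊢
  induction l with
  | nil => simp
  | cons p l ih =>
    obtain ⟨hp, hl⟩ := List.forall_mem_cons.1 hv
    have split_head (i : ℕ) :
        ((((p :: l).filter (·.1 = i)).map Prod.snd).flatMap fun j => σ (i, j)).length =
          (if p.1 = i then (σ p).length else 0) +
            (((l.filter (·.1 = i)).map Prod.snd).flatMap fun j => σ (i, j)).length := by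
      by_cases hi : p.1 = i
      · subst hi; simp
      · simp [hi]
    rw [List.flatMap_cons, List.length_append, ih hl, Finset.sum_congr rfl fun i _ => split_head i,
      Finset.sum_add_distrib, Finset.sum_ite_eq, if_pos (Finset.mem_range.2 hp)]

end Restrict

section Derivations

variable {Δ N : Type} {sortN : N → ℕ}

/-- Component `j` of the yield of a derivation tree, empty if `j` is out of range. -/
def Tree.component (t : Tree (Production Δ N sortN)) (j : ℕ) : List Δ := t.yield.getD j []

/-- The value of the variable `x_i^j` for a list of child derivations, empty if `(i, j)` is out of
range. -/
def childComponent (ts : List (Tree (Production Δ N sortN))) (p : ℕ × ℕ) : List Δ :=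
  ((ts.map Tree.yield).getD p.1 []).getD p.2 []

/-- Substitute the components of a production for the holes of `u`. -/
def Production.expand (ρ : Production Δ N sortN) (u : List (Δ ⊕ ℕ)) : List (Δ ⊕ ℕ × ℕ) :=
  substHoles (fun j => ρ.comp.getD j []) u

theorem childComponent_eq {ts : List (Tree (Production Δ N sortN))} {i : ℕ} (hi : i < ts.length)
    (j : ℕ) : childComponent ts (i, j) = ts[i].component j := by
  simp [childComponent, Tree.component, hi]

theorem childComponent_set {ts : List (Tree (Production Δ N sortN))} {i : ℕ} (hi : i < ts.length)
    (t : Tree (Production Δ N sortN)) (p : ℕ × ℕ) :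
    childComponent (ts.set i t) p = if p.1 = i then t.component p.2 else childComponent ts p := by
  rcases p with ⟨i', j⟩
  rcases eq_or_ne i' i with rfl | h
  · simp [childComponent, Tree.component, hi]
  · simp [childComponent, h, h.symm]

theorem Tree.yield_node (ρ : Production Δ N sortN) (ts : List (Tree (Production Δ N sortN))) :
    (Tree.node ρ ts).yield = ρ.comp.map (subst (ts.map Tree.yield)) := by
  rw [Tree.yield, List.attach_map_val (f := Tree.yield)]

theorem Tree.component_node (ρ : Production Δ N sortN) (ts : List (Tree (Production Δ N sortN)))
    (j : ℕ) : (Tree.node ρ ts).component j = fill (childComponent ts) (ρ.comp.getD j []) := by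
  change _ = fill (fun p : ℕ × ℕ => ((ts.map Tree.yield).getD p.1 []).getD p.2 []) _
  rw [← subst_eq_fill, Tree.component, Tree.yield_node]
  exact List.getD_map (f := subst (ts.map Tree.yield)) (d := []) ..

theorem fill_component_node (ρ : Production Δ N sortN) (ts : List (Tree (Production Δ N sortN)))
    (u : List (Δ ⊕ ℕ)) :
    fill (Tree.node ρ ts).component u = fill (childComponent ts) (ρ.expand u) := by
  rw [Production.expand, fill_substHoles, funext (Tree.component_node ρ ts)]

theorem fill_component_restrict_expand (ρ : Production Δ N sortN)
    {ts : List (Tree (Production Δ N sortN))} {i : ℕ} (hi : i < ts.length)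
    (t : Tree (Production Δ N sortN)) (u : List (Δ ⊕ ℕ)) :
    fill t.component (restrict (childComponent ts) i (ρ.expand u)) =
      fill (Tree.node ρ (ts.set i t)).component u := by
  rw [fill_restrict, fill_component_node, funext (childComponent_set hi t)]

theorem flatMap_getD_subperm_flatten {α : Type*} (L : List (List α)) {l : List ℕ} (hl : l.Nodup)
    (hlt : ∀ j ∈ l, j < L.length) : (l.flatMap fun j => L.getD j []).Subperm L.flatten := by
  have subperm_range : l.Subperm (List.range L.length) :=
    hl.subperm fun j hj => List.mem_range.2 (hlt j hj)
  have map_range : (List.range L.length).map (fun j => L.getD j []) = L :=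
    List.ext_getElem (by simp) fun j h₁ h₂ => by simp [h₂]
  obtain ⟨l', hperm, hsub⟩ := subperm_range
  refine ⟨l'.flatMap fun j => L.getD j [], hperm.flatMap_right _, ?_⟩
  conv_rhs => rw [← map_range, ← List.flatMap_def]
  exact hsub.flatMap _

namespace Production

variable (ρ : Production Δ N sortN) {u : List (Δ ⊕ ℕ)} (hu : (holes u).Nodup)
  (hlt : ∀ j ∈ holes u, j < ρ.comp.length)

include hu hlt

theorem holes_expand_subperm : (holes (ρ.expand u)).Subperm ρ.vars := by
  obtain ⟨l, hperm, hsub⟩ := flatMap_getD_subperm_flatten ρ.comp hu hlt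
  rw [expand, holes_substHoles]
  simp only [holes, ← List.filterMap_flatMap]
  exact ⟨l.filterMap Sum.getRight?, hperm.filterMap _, hsub.filterMap _⟩

theorem nodup_holes_expand : (holes (ρ.expand u)).Nodup := by
  obtain ⟨l, hperm, hsub⟩ := ρ.holes_expand_subperm hu hlt
  exact hperm.nodup_iff.1 (hsub.nodup ρ.linear)

theorem length_content_component_node_le (ts : List (Tree (Production Δ N sortN))) :
    (content (Tree.node ρ ts).component u).length ≤
      ρ.comp.flatten.length + (content (childComponent ts) (ρ.expand u)).length := by
  have content_eq : content (Tree.node ρ ts).component u =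
      fill (childComponent ts) ((holes u).flatMap fun j => ρ.comp.getD j []) := by
    rw [content, funext (Tree.component_node ρ ts), fill, List.flatMap_assoc]
    rfl
  have holes_eq : holes ((holes u).flatMap fun j => ρ.comp.getD j []) =
      holes (ρ.expand u) := by
    rw [expand, holes_substHoles, holes, List.filterMap_flatMap]
    rfl
  have length_le := length_fill_le (childComponent ts)
    ((holes u).flatMap fun j => ρ.comp.getD j [])
  rw [content, holes_eq, ← content, ← content_eq] at length_le
  exact length_le.trans
    (Nat.add_le_add_right (flatMap_getD_subperm_flatten ρ.comp hu hlt).length_le _)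

end Production

end Derivations

section Cuts

variable {Δ : Type} {G : MCFG Δ}

theorem WFDeriv.length_yield {A : G.N} {t : Tree (Production Δ G.N G.sortN)}
    (ht : WFDeriv G.P A t) : t.yield.length = G.sortN A := by
  cases ht with
  | node ρ ts => rw [Tree.yield_node, List.length_map, ρ.comp_len]

theorem WFDeriv.sortN_le {k : ℕ} (hk : G.FanoutLE k) {A : G.N}
    {t : Tree (Production Δ G.N G.sortN)} (ht : WFDeriv G.P A t) : G.sortN A ≤ k := by
  cases ht with
  | node ρ ts hρ => exact ρ.comp_len ▸ hk ρ hρ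

theorem WFDeriv.node_set {ρ : Production Δ G.N G.sortN}
    {ts : List (Tree (Production Δ G.N G.sortN))} (hρ : ρ ∈ G.P) (hlen : ts.length = ρ.rhs.length)
    (hts : ∀ (i : ℕ) (h₁ : i < ts.length) (h₂ : i < ρ.rhs.length),
      WFDeriv G.P (ρ.rhs.get ⟨i, h₂⟩) (ts.get ⟨i, h₁⟩))
    {i : ℕ} (hi : i < ρ.rhs.length) {t : Tree (Production Δ G.N G.sortN)}
    (ht : WFDeriv G.P (ρ.rhs.get ⟨i, hi⟩) t) : WFDeriv G.P ρ.lhs (Tree.node ρ (ts.set i t)) := by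
  refine WFDeriv.node ρ _ hρ (by simpa using hlen) fun i' h₁ h₂ => ?_
  rcases eq_or_ne i i' with rfl | hne
  · simpa using ht
  · simpa [hne] using hts i' (by simpa using h₁) h₂

/-- `u` is a linear context for the non-terminal `A`: filling it with the components of any
derivation from `A` gives a word of the language. The hole `j` stands for component `j`; since
grammars may delete components, not every `j < sortN A` need occur. -/
structure IsContext (G : MCFG Δ) (A : G.N) (u : List (Δ ⊕ ℕ)) : Prop where
  nodup : (holes u).Nodup
  lt_sortN : ∀ j ∈ holes u, j < G.sortN A
  fill_mem : ∀ t, WFDeriv G.P A t → fill t.component u ∈ G.lang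

theorem isContext_start (G : MCFG Δ) : IsContext G G.S [Sum.inr 0] where
  nodup := List.nodup_singleton 0
  lt_sortN := by simp [holes, G.sort_S]
  fill_mem t ht := by
    obtain ⟨w, hw⟩ := List.length_eq_one_iff.1 (ht.length_yield.trans G.sort_S)
    exact ⟨t, ht, by simp [hw, fill, Tree.component]⟩

theorem IsContext.child {ρ : Production Δ G.N G.sortN}
    {ts : List (Tree (Production Δ G.N G.sortN))} {u : List (Δ ⊕ ℕ)} (hu : IsContext G ρ.lhs u)
    (hρ : ρ ∈ G.P) (hlen : ts.length = ρ.rhs.length)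
    (hts : ∀ (i : ℕ) (h₁ : i < ts.length) (h₂ : i < ρ.rhs.length),
      WFDeriv G.P (ρ.rhs.get ⟨i, h₂⟩) (ts.get ⟨i, h₁⟩))
    {i : ℕ} (hi : i < ρ.rhs.length) :
    IsContext G (ρ.rhs.get ⟨i, hi⟩) (restrict (childComponent ts) i (ρ.expand u)) := by
  have hlt : ∀ j ∈ holes u, j < ρ.comp.length := ρ.comp_len ▸ hu.lt_sortN
  refine ⟨nodup_holes_restrict _ _ (ρ.nodup_holes_expand hu.nodup hlt),
    fun j hj => ?_, fun t ht => ?_⟩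
  · exact (ρ.wf (i, j) ((ρ.holes_expand_subperm hu.nodup hlt).subset
      (mem_holes_restrict.1 hj))).2
  · rw [fill_component_restrict_expand ρ (hlen ▸ hi)]
    exact hu.fill_mem _ (WFDeriv.node_set hρ hlen hts hi ht)

/-- A derivation of a word of `G`, cut at one node into the subderivation below that node and the
context around it. -/
structure Cut (G : MCFG Δ) where
  nonterminal : G.N
  tree : Tree (Production Δ G.N G.sortN)
  context : List (Δ ⊕ ℕ)
  wfDeriv : WFDeriv G.P nonterminal tree
  isContext : IsContext G nonterminal context

namespace Cut

/-- The word whose derivation is cut. -/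
def word (c : Cut G) : List Δ := fill c.tree.component c.context

/-- The letters of `c.word` that stem from the subderivation. -/
def content (c : Cut G) : List Δ := CS.content c.tree.component c.context

theorem toFinset_holes_subset {k : ℕ} (hk : G.FanoutLE k) (c : Cut G) :
    (holes c.context).toFinset ⊆ Finset.range k := fun j hj =>
  Finset.mem_range.2
    ((c.isContext.lt_sortN j (List.mem_toFinset.1 hj)).trans_le (c.wfDeriv.sortN_le hk))

theorem length_holes_le {k : ℕ} (hk : G.FanoutLE k) (c : Cut G) :
    (holes c.context).length ≤ k := by
  rw [← List.toFinset_card_of_nodup c.isContext.nodup, ← Finset.card_range k]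
  exact Finset.card_le_card (c.toFinset_holes_subset hk)

theorem word_mem_lang (c : Cut G) : c.word ∈ G.lang := c.isContext.fill_mem _ c.wfDeriv

theorem word_perm (c : Cut G) : c.word.Perm (terminals c.context ++ c.content) :=
  fill_perm _ _

theorem exists_mem_lang_perm {c c' : Cut G} (hnt : c.nonterminal = c'.nonterminal)
    (hholes : (holes c.context).toFinset = (holes c'.context).toFinset) :
    ∃ w ∈ G.lang, w.Perm (terminals c.context ++ c'.content) := by
  have holes_perm : (holes c.context).Perm (holes c'.context) :=
    List.perm_of_nodup_nodup_toFinset_eq c.isContext.nodup c'.isContext.nodup hholes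
  exact ⟨fill c'.tree.component c.context, c.isContext.fill_mem _ (hnt ▸ c'.wfDeriv),
    (fill_perm _ _).trans ((holes_perm.flatMap_right _).append_left _)⟩

end Cut

theorem exists_lt_length_content_child {ρ : Production Δ G.N G.sortN}
    {ts : List (Tree (Production Δ G.N G.sortN))} {u : List (Δ ⊕ ℕ)} (hu : IsContext G ρ.lhs u)
    (hlen : ts.length = ρ.rhs.length) {g : ℕ}
    (hg : ρ.comp.flatten.length + ρ.rhs.length * g <
      (content (Tree.node ρ ts).component u).length) :
    ∃ (i : ℕ) (hi : i < ts.length),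
      g < (content ts[i].component (restrict (childComponent ts) i (ρ.expand u))).length := by
  have hlt : ∀ j ∈ holes u, j < ρ.comp.length := ρ.comp_len ▸ hu.lt_sortN
  have child_lt : ∀ p ∈ holes (ρ.expand u), p.1 < ts.length := fun p hp =>
    hlen ▸ (ρ.wf p ((ρ.holes_expand_subperm hu.nodup hlt).subset hp)).1
  have sum_lt : ∑ _i ∈ Finset.range ts.length, g < ∑ i ∈ Finset.range ts.length,
      (content (fun j => childComponent ts (i, j))
        (restrict (childComponent ts) i (ρ.expand u))).length := by
    rw [← length_content_eq_sum_restrict _ child_lt, Finset.sum_const, Finset.card_range,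
      smul_eq_mul, hlen]
    have := ρ.length_content_component_node_le hu.nodup hlt ts
    omega
  obtain ⟨i, hi, hgi⟩ := Finset.exists_lt_of_sum_lt sum_lt
  refine ⟨i, Finset.mem_range.1 hi, ?_⟩
  rwa [funext (childComponent_eq (Finset.mem_range.1 hi))] at hgi

/-- Descend into a child of large content until the content drops below the upper bound. -/
theorem exists_cut_of_isContext {T r g : ℕ} (hT : ∀ ρ ∈ G.P, ρ.comp.flatten.length ≤ T)
    (hr : ∀ ρ ∈ G.P, ρ.rhs.length ≤ r) {A : G.N} {t : Tree (Production Δ G.N G.sortN)}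
    (ht : WFDeriv G.P A t) {u : List (Δ ⊕ ℕ)} (hu : IsContext G A u)
    (hg : g ≤ (content t.component u).length) :
    ∃ c : Cut G, c.word = fill t.component u ∧ g ≤ c.content.length ∧
      c.content.length ≤ T + r * g := by
  induction ht generalizing u with
  | node ρ ts hρ hlen hts ih =>
    rcases le_or_gt (content (Tree.node ρ ts).component u).length (T + r * g) with hle | hgt
    · exact ⟨⟨ρ.lhs, Tree.node ρ ts, u, .node ρ ts hρ hlen hts, hu⟩, rfl, hg, hle⟩
    have bound : ρ.comp.flatten.length + ρ.rhs.length * g ≤ T + r * g :=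
      Nat.add_le_add (hT ρ hρ) (Nat.mul_le_mul_right g (hr ρ hρ))
    obtain ⟨i, hi, hgi⟩ := exists_lt_length_content_child hu hlen (bound.trans_lt hgt)
    have hi' : i < ρ.rhs.length := hlen ▸ hi
    obtain ⟨c, hword, hc⟩ := ih i hi hi' (hu.child hρ hlen hts hi') hgi.le
    refine ⟨c, ?_, hc⟩
    rw [hword, List.get_eq_getElem, fill_component_restrict_expand ρ hi, List.set_getElem_self]

theorem exists_cut {T r g : ℕ} (hT : ∀ ρ ∈ G.P, ρ.comp.flatten.length ≤ T)
    (hr : ∀ ρ ∈ G.P, ρ.rhs.length ≤ r) {w : List Δ} (hw : w ∈ G.lang) (hg : g ≤ w.length) :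
    ∃ c : Cut G, c.word = w ∧ g ≤ c.content.length ∧ c.content.length ≤ T + r * g := by
  obtain ⟨t, ht, hyield⟩ := hw
  have fill_eq : fill t.component [Sum.inr 0] = w := by simp [fill, Tree.component, hyield]
  have content_eq : content t.component [Sum.inr 0] = w := by
    simp [content, holes, Tree.component, hyield]
  rw [← fill_eq]
  exact exists_cut_of_isContext hT hr ht (isContext_start G) (by rwa [content_eq])

end Cuts

/-! ### Languages with equal letter counts -/

section Balanced

theorem card_toFinset_le_two_of_infix_flatMap {α : Type*} [DecidableEq α] {l : List α}
    {n : ℕ} {y : List α} (hy : y <:+: l.flatMap (List.replicate n)) (hlen : y.length ≤ n) :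
    y.toFinset.card ≤ 2 := by
  induction l with
  | nil => simp [List.infix_nil.1 hy]
  | cons a l ih =>
    rw [List.flatMap_cons, List.infix_append_iff] at hy
    rcases hy with hy | hy | ⟨y₁, y₂, rfl, hy₁, hy₂⟩
    · exact (Finset.card_le_card (t := {a}) fun x hx => by
        simpa using List.eq_of_mem_replicate (hy.subset (List.mem_toFinset.1 hx))).trans (by simp)
    · exact ih hy
    · obtain ⟨b, hb⟩ : ∃ b, ∀ x ∈ y₂, x = b := by
        cases l with
        | nil => exact ⟨a, by simp [List.prefix_nil.1 hy₂]⟩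
        | cons b l =>
          have length_le : y₂.length ≤ (List.replicate n b).length := by
            rw [List.length_append] at hlen
            rw [List.length_replicate]
            omega
          have hy₂' : y₂ <+: List.replicate n b :=
            List.prefix_of_prefix_length_le hy₂ (List.prefix_append _ _) length_le
          exact ⟨b, fun x hx => List.eq_of_mem_replicate (hy₂'.subset hx)⟩
      refine (Finset.card_le_card (t := {a, b}) fun x hx => ?_).trans Finset.card_le_two
      rcases List.mem_append.1 (List.mem_toFinset.1 hx) with hx | hx
      · simp [List.eq_of_mem_replicate (hy₁.subset hx)]
      · simp [hb x hx]

theorem card_toFinset_flatMap_le {α ι : Type*} [DecidableEq α] {l : List ι}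
    {f : ι → List α} {m : ℕ} (h : ∀ i ∈ l, (f i).toFinset.card ≤ m) :
    (l.flatMap f).toFinset.card ≤ l.length * m := by
  induction l with
  | nil => simp
  | cons i l ih =>
    obtain ⟨hi, hl⟩ := List.forall_mem_cons.1 h
    calc
      ((i :: l).flatMap f).toFinset.card ≤
          (f i).toFinset.card + (l.flatMap f).toFinset.card := by
        rw [List.flatMap_cons, List.toFinset_append]
        exact Finset.card_union_le _ _
      _ ≤ m + l.length * m := Nat.add_le_add hi (ih hl)
      _ = (i :: l).length * m := by rw [List.length_cons]; ring

variable {α : Type}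

theorem Cut.exists_notMem_content [Fintype α] {G : MCFG α} {k : ℕ} (hk : G.FanoutLE k)
    (hα : 2 * k < Fintype.card α) {c : Cut G} {l : List α} {n : ℕ}
    (hword : c.word = l.flatMap (List.replicate n)) (hn : c.content.length ≤ n) :
    ∃ a, a ∉ c.content := by
  classical
  have card_component_le : ∀ j ∈ holes c.context,
      (c.tree.component j).toFinset.card ≤ 2 := fun j hj =>
    have infix_word : c.tree.component j <:+: c.word := infix_fill _ hj
    have length_le : (c.tree.component j).length ≤ c.content.length :=
      (List.sublist_flatten_of_mem (List.mem_map_of_mem hj)).length_le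
    card_toFinset_le_two_of_infix_flatMap (hword ▸ infix_word) (length_le.trans hn)
  have card_lt : c.content.toFinset.card < Fintype.card α :=
    calc
      c.content.toFinset.card ≤ (holes c.context).length * 2 :=
        card_toFinset_flatMap_le card_component_le
      _ ≤ k * 2 := Nat.mul_le_mul_right 2 (c.length_holes_le hk)
      _ < Fintype.card α := by omega
  simpa using Finset.exists_mem_notMem_of_card_lt_card (t := Finset.univ) card_lt

/-- Exchanging the contents of two cuts preserves the count of a letter missing from both, hence
all counts and the length. -/
theorem Cut.length_content_eq [DecidableEq α] {G : MCFG α}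
    (hcount : ∀ w ∈ G.lang, ∀ a b, w.count a = w.count b) {c c' : Cut G}
    (hnt : c.nonterminal = c'.nonterminal)
    (hholes : (holes c.context).toFinset = (holes c'.context).toFinset) {a : α}
    (ha : a ∉ c.content) (ha' : a ∉ c'.content) : c.content.length = c'.content.length := by
  obtain ⟨w, hw, hperm⟩ := Cut.exists_mem_lang_perm hnt hholes
  have count_eq : c.word.count a = w.count a := by
    rw [c.word_perm.count_eq, hperm.count_eq, List.count_append, List.count_append,
      List.count_eq_zero.2 ha, List.count_eq_zero.2 ha']
  have word_perm_exchange : c.word.Perm w := List.perm_iff_count.2 fun b => by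
    rw [hcount _ c.word_mem_lang b a, count_eq, hcount w hw a b]
  have contents_perm : c.content.Perm c'.content :=
    (List.perm_append_left_iff _).1
      ((c.word_perm.symm.trans word_perm_exchange).trans hperm)
  exact contents_perm.length_eq

theorem exists_eq_and_lt {κ : Type*} [Finite κ] (f : ℕ → κ) {s : ℕ → ℕ} (hs : ∀ g, g ≤ s g) :
    ∃ g g', f g = f g' ∧ s g < s g' := by
  obtain ⟨x, hx⟩ := Finite.exists_infinite_fiber f
  have fiber_infinite : (f ⁻¹' {x}).Infinite := Set.infinite_coe_iff.1 hx
  obtain ⟨g, hg⟩ := fiber_infinite.nonempty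
  obtain ⟨g', hg', hlt⟩ := fiber_infinite.exists_gt (s g)
  exact ⟨g, g', hg.trans hg'.symm, hlt.trans_le (hs g')⟩

theorem MCFG.exists_bounds {Δ : Type} {G : MCFG Δ} (hP : G.P.Finite) :
    ∃ T r, (∀ ρ ∈ G.P, ρ.comp.flatten.length ≤ T) ∧ ∀ ρ ∈ G.P, ρ.rhs.length ≤ r := by
  obtain ⟨T, hT⟩ := (hP.image fun ρ => ρ.comp.flatten.length).bddAbove
  obtain ⟨r, hr⟩ := (hP.image fun ρ => ρ.rhs.length).bddAbove
  exact ⟨T, r, fun ρ hρ => hT ⟨ρ, hρ, rfl⟩, fun ρ hρ => hr ⟨ρ, hρ, rfl⟩⟩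

theorem notMem_mcfl_of_count_eq [DecidableEq α] [Fintype α] {k : ℕ} (hα : 2 * k < Fintype.card α)
    {L : Set (List α)} (hcount : ∀ w ∈ L, ∀ a b, w.count a = w.count b) {l : List α} (hl : l ≠ [])
    (hmem : ∀ n, l.flatMap (List.replicate n) ∈ L) : L ∉ MCFL k α := by
  rintro ⟨G, hN, hP, hk, rfl⟩
  obtain ⟨T, r, hT, hr⟩ := MCFG.exists_bounds hP
  have exists_small_cut (g : ℕ) : ∃ (c : Cut G) (a : α), g ≤ c.content.length ∧ a ∉ c.content := by
    set n := T + r * g + g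
    have le_length : g ≤ (l.flatMap (List.replicate n)).length :=
      calc
        g ≤ n := Nat.le_add_left g _
        _ ≤ l.length * n := Nat.le_mul_of_pos_left n (List.length_pos_iff.2 hl)
        _ = (l.flatMap (List.replicate n)).length := by simp
    obtain ⟨c, hword, hg, hle⟩ := exists_cut hT hr (hmem n) le_length
    obtain ⟨a, ha⟩ := c.exists_notMem_content hk hα hword (hle.trans (Nat.le_add_right _ g))
    exact ⟨c, a, hg, ha⟩
  choose c a hg ha using exists_small_cut
  obtain ⟨g, g', heq, hlt⟩ := exists_eq_and_lt (s := fun g => (c g).content.length) (fun g =>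
    ((c g).nonterminal, a g, (⟨(holes (c g).context).toFinset,
      Finset.mem_powerset.2 ((c g).toFinset_holes_subset hk)⟩ : (Finset.range k).powerset))) hg
  simp only [Prod.mk.injEq, Subtype.mk.injEq] at heq
  obtain ⟨hnt, ha_eq, hholes⟩ := heq
  exact hlt.ne (Cut.length_content_eq hcount hnt hholes (ha g) (ha_eq ▸ ha g'))

end Balanced

/-! ### Multiple Dyck languages -/

section MultipleDyck

variable {S : Type} {P : Set (Set S)}

theorem MDyckRel.sum_map_eq {A : Type} [AddCommMonoid A] {φ : S ⊕ S → A}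
    (hφ : ∀ s : Finset S, ↑s ∈ P → ∑ σ ∈ s, (φ (Sum.inl σ) + φ (Sum.inr σ)) = 0)
    {u v : List (S ⊕ S)} (h : MDyckRel S P u v) : (u.map φ).sum = (v.map φ).sum := by
  classical
  induction h with
  | refl w => rfl
  | symm _ ih => exact ih.symm
  | trans _ _ ih₁ ih₂ => exact ih₁.trans ih₂
  | append _ _ ih₁ ih₂ => simp [ih₁, ih₂]
  | cancel u₀ ts hnodup hP _ _ _ ih =>
    have brackets_sum :
        (ts.map fun t => φ (Sum.inl t.1) + φ (Sum.inr t.1)).sum = 0 := by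
      have coe_toFinset : ((ts.map Prod.fst).toFinset : Set S) = {σ | σ ∈ ts.map Prod.fst} := by
        ext σ; exact List.mem_toFinset
      rw [← hφ _ (coe_toFinset ▸ hP), List.sum_toFinset _ hnodup, List.map_map]
      rfl
    have inner_sum : (ts.map fun t => (t.2.1.map φ).sum).sum = 0 := by
      simpa [List.map_flatten, List.sum_flatten, Function.comp_def] using ih
    have blocks_sum :
        (ts.map fun t => ((Sum.inl t.1 :: t.2.1 ++ [Sum.inr t.1] ++ t.2.2).map φ).sum).sum =
          (ts.map fun t => (t.2.2.map φ).sum).sum :=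
      calc
        _ = (ts.map fun t => (φ (Sum.inl t.1) + φ (Sum.inr t.1)) +
              ((t.2.1.map φ).sum + (t.2.2.map φ).sum)).sum := by
          refine congrArg List.sum (List.map_congr_left fun t _ => ?_)
          simp only [List.cons_append, List.map_cons, List.map_append, List.map_nil, List.sum_cons,
            List.sum_append, List.sum_nil, add_zero]
          ac_rfl
        _ = (ts.map fun t => φ (Sum.inl t.1) + φ (Sum.inr t.1)).sum +
              ((ts.map fun t => (t.2.1.map φ).sum).sum +
                (ts.map fun t => (t.2.2.map φ).sum).sum) := by
          rw [← List.sum_map_add, ← List.sum_map_add]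
        _ = (ts.map fun t => (t.2.2.map φ).sum).sum := by
          rw [brackets_sum, inner_sum, zero_add, zero_add]
    simpa [List.map_flatten, List.sum_flatten, Function.comp_def] using
      congrArg ((u₀.map φ).sum + ·) blocks_sum

theorem count_eq_of_mem_mDyckLang_univ [DecidableEq (S ⊕ S)] {w : List (S ⊕ S)}
    (hw : w ∈ MDyckLang S {Set.univ}) (a b : S ⊕ S) : w.count a = w.count b := by
  let φ : S ⊕ S → ℤ := fun x => (if x = a then 1 else 0) - if x = b then 1 else 0
  have sum_map_φ (v : List (S ⊕ S)) : (v.map φ).sum = v.count a - v.count b := by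
    induction v with
    | nil => rfl
    | cons x v ih =>
      simp only [List.map_cons, List.sum_cons, ih, List.count_cons, beq_iff_eq, φ]
      push_cast
      ring
  have sum_brackets (s : Finset S) (hs : ↑s ∈ ({Set.univ} : Set (Set S))) :
      ∑ σ ∈ s, (φ (Sum.inl σ) + φ (Sum.inr σ)) = 0 := by
    have mem_disjSum (x : S ⊕ S) : x ∈ s.disjSum s := by
      have mem_s (σ : S) : σ ∈ s := (Set.mem_singleton_iff.1 hs).ge (Set.mem_univ σ)
      cases x <;> simp [mem_s]
    rw [Finset.sum_add_distrib, ← Finset.sum_disjSum]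
    simp [φ, Finset.sum_sub_distrib, mem_disjSum]
  have sum_eq_zero := MDyckRel.sum_map_eq sum_brackets hw
  rw [sum_map_φ, List.map_nil, List.sum_nil] at sum_eq_zero
  omega

/-- The word `σⁿ σ̄ⁿ`. -/
def nestedBlock (n : ℕ) (σ : S) : List (S ⊕ S) :=
  List.replicate n (Sum.inl σ) ++ List.replicate n (Sum.inr σ)

theorem nestedBlock_succ (n : ℕ) (σ : S) :
    nestedBlock (n + 1) σ = Sum.inl σ :: nestedBlock n σ ++ [Sum.inr σ] := by
  rw [nestedBlock, List.replicate_succ, List.replicate_succ']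
  simp [nestedBlock]

theorem nestedBlock_mem_dyckLang (n : ℕ) (σ : S) : nestedBlock n σ ∈ DyckLang S := by
  induction n with
  | zero => exact .refl []
  | succ n ih =>
    rw [nestedBlock_succ]
    exact ((DyckRel.refl [Sum.inl σ]).append ih |>.append (.refl [Sum.inr σ])).trans (.cancel σ)

theorem flatMap_nestedBlock_mem_mDyckLang {l : List S} (hl : l.Nodup) (hP : {σ | σ ∈ l} ∈ P)
    (n : ℕ) : l.flatMap (nestedBlock n) ∈ MDyckLang S P := by
  induction n with
  | zero =>
    have flatMap_eq_nil : l.flatMap (nestedBlock 0) = [] := by simp [nestedBlock]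
    exact flatMap_eq_nil ▸ .refl []
  | succ n ih =>
    rw [List.flatMap_def] at ih
    have cancel := MDyckRel.cancel (P := P) [] (l.map fun σ => (σ, nestedBlock n σ, []))
      (by simpa [Function.comp_def] using hl) (by simpa [Function.comp_def] using hP) (.refl [])
      (by simpa using fun σ _ => ⟨nestedBlock_mem_dyckLang n σ, .refl []⟩)
      (by rwa [List.map_map])
    rw [List.flatMap_def, funext (nestedBlock_succ n)]
    simpa [MDyckLang, Function.comp_def] using cancel

theorem mDyckLang_univ_notMem_mcfl [Fintype S] {k : ℕ} (hk : k < Fintype.card S) :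
    MDyckLang S {Set.univ} ∉ MCFL k (S ⊕ S) := by
  classical
  refine notMem_mcfl_of_count_eq (by rw [Fintype.card_sum]; omega)
    (fun w => count_eq_of_mem_mDyckLang_univ)
    (l := Finset.univ.toList.flatMap fun σ : S => [Sum.inl σ, Sum.inr σ]) ?_ fun n => ?_
  · have : Nonempty S := Fintype.card_pos_iff.1 (by omega)
    simp
  · have block_eq : (fun σ : S => [Sum.inl σ, Sum.inr σ].flatMap (List.replicate n)) =
        nestedBlock n := by
      funext σ
      simp [nestedBlock]
    rw [List.flatMap_assoc, block_eq]
    exact flatMap_nestedBlock_mem_mDyckLang (Finset.nodup_toList _) (by simp) n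

end MultipleDyck

end CS

/-- For every `k ≥ 1` there is a congruence multiple Dyck
language of dimension at most `k + 1` that is not a multiple context-free
language of fan-out at most `k`: `cmDYCK_{k+1} ∖ MCFL_k ≠ ∅`. -/
theorem CS.cmDyck_succ_not_MCFL (k : ℕ) (hk : 1 ≤ k) :
    ∃ (S : Type) (_ : Fintype S) (Pa : Set (Set S)),
      Setoid.IsPartition Pa ∧ (∀ p ∈ Pa, p.ncard ≤ k + 1) ∧
      CS.MDyckLang S Pa ∉ CS.MCFL k (S ⊕ S) := by
  refine ⟨Fin (k + 1), inferInstance, {Set.univ}, ?_, fun p hp => ?_,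
    CS.mDyckLang_univ_notMem_mcfl (by simp)⟩
  · exact ⟨by simpa using (Set.univ_nonempty (α := Fin (k + 1))).ne_empty.symm,
      fun a => ⟨Set.univ, by simp, by simp⟩⟩
  · rw [Set.mem_singleton_iff.1 hp]
    simp [Set.ncard_univ]
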